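/- The semigroup UT₃^±(ℝ) of all upper triangular real 3×3 matrices whose main-diagonal entries belong to {0, 1, −1} (under matrix multiplication) is nonfinitely based: there is no finite set Σ of semigroup identities holding in UT₃^±(ℝ) such that every semigroup identity holding in UT₃^±(ℝ) follows from Σ. -/

import Mathlib

/-!
Given finitely many identities of `UT3pm`, choose a prime `k` exceeding `10` and the lengths of all
words in them. The proof exhibits an identity `U ≈ V` of `UT3pm` and a semigroup that satisfies all
the given identities but not `U ≈ V`.

*Isoterms.* Let `s ≈ t` hold in `UT3pm`. Substituting unitriangular matrices shows that `s` and `t`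
have the same letter counts, and matrices with first diagonal entry `0` detect the first letter.
For matrices with middle diagonal entry `0` the `(1,3)` entry of a product is a sum over the
occurrences of a two-letter factor `ab` of (character of the prefix) · (character of the suffix).
Linear independence of characters then matches the occurrences of `ab` in `t` with occurrences in
`s` whose prefixes and suffixes have the same content and the same parities (`WordId.adj`). It
follows that `s = t` unless `s` has a *fold*: a factor `a m a` with `a` in `m`, all of whose letters
occur at least four times in `s` (`WordId.eq_of_not_hasFold`).

*The long identity.* Let `U` and `V` be the patterns `p x y z x z y x q` and `p x z y x y z x q`,
with each variable replaced by a product of two arithmetic progressions `0, j, 2j, …` modulo `k`,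
where different variables use different strides `j`. Each progression is a permutation of
`0, …, k - 1`, so all variables take values with a common `0`/`1` diagonal, and for such matrices
the pattern identity holds by direct computation (`utm_identity`, `wordId_blocks`).

*Separation.* A two-letter factor of `U` determines its stride and occurs at most three times in
`U`; a factor of length at most `k` cannot contain the same letter three times. Hence no word `s` of
length at most `k` with a fold has a substitution image that is a factor of `U`
(`not_hasFold_of_factor`). So in the Rees quotient of the free semigroup by the ideal of words that
are not factors of `U`, every given identity holds: a side having an image outside the ideal is an
isoterm, which makes the identity trivial, and otherwise both sides take the value zero. But
`U ≠ V` and `U` lies outside the ideal, so `U ≈ V` fails there.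
-/

/-- The subsemigroup `UT₃^±(ℝ)` of the multiplicative semigroup of real `3 × 3` matrices
consisting of the upper triangular matrices whose main-diagonal entries belong to
`{0, 1, -1}`. -/
def UT3pm : Subsemigroup (Matrix (Fin 3) (Fin 3) ℝ) where
  carrier := {A | (∀ i j : Fin 3, (j : ℕ) < (i : ℕ) → A i j = 0) ∧
    ∀ i : Fin 3, A i i = 0 ∨ A i i = 1 ∨ A i i = -1}
  mul_mem' := by
    rintro A B ⟨hA1, hA2⟩ ⟨hB1, hB2⟩
    constructor
    · intro i j hij
      rw [Matrix.mul_apply]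
      apply Finset.sum_eq_zero
      intro k _
      rcases lt_or_ge (k : ℕ) (i : ℕ) with h | h
      · rw [hA1 i k h, zero_mul]
      · rw [hB1 k j (lt_of_lt_of_le hij h), mul_zero]
    · intro i
      rw [Matrix.mul_apply, Finset.sum_eq_single i]
      · rcases hA2 i with h1 | h1 | h1 <;> rcases hB2 i with h2 | h2 | h2 <;>
          rw [h1, h2] <;> norm_num
      · intro k _ hk
        rcases lt_or_ge (k : ℕ) (i : ℕ) with h | h
        · rw [hA1 i k h, zero_mul]
        · have hik : (i : ℕ) < (k : ℕ) :=
            lt_of_le_of_ne h (fun he => hk (Fin.val_injective he.symm))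
          rw [hB1 k i hik, mul_zero]
      · intro h
        exact absurd (Finset.mem_univ i) h

/-- A semigroup `S` satisfies the semigroup identity `(u, v)` (a pair of elements of the
free semigroup on a countable alphabet) if every homomorphism to `S` equalizes `u` and `v`. -/
def SatisfiesId (S : Type*) [Semigroup S] (e : FreeSemigroup ℕ × FreeSemigroup ℕ) : Prop :=
  ∀ φ : FreeSemigroup ℕ →ₙ* S, φ e.1 = φ e.2

/-- The identity `e` follows from the system of identities `Sgm` if every semigroup
satisfying all identities of `Sgm` also satisfies `e`. -/
def FollowsFrom (Sgm : Set (FreeSemigroup ℕ × FreeSemigroup ℕ))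
    (e : FreeSemigroup ℕ × FreeSemigroup ℕ) : Prop :=
  ∀ (T : Type) [Semigroup T], (∀ e' ∈ Sgm, SatisfiesId T e') → SatisfiesId T e

/-! ### Upper triangular matrices with a common diagonal -/

/-- The upper triangular matrix with diagonal `e` and entries `a`, `b`, `c` at `(1,2)`, `(1,3)`,
`(2,3)` in the usual numbering. -/
def utm (e : Fin 3 → ℝ) (a b c : ℝ) : Matrix (Fin 3) (Fin 3) ℝ :=
  !![e 0, a, b; 0, e 1, c; 0, 0, e 2]

theorem utm_mul (e e' : Fin 3 → ℝ) (a b c a' b' c' : ℝ) :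
    utm e a b c * utm e' a' b' c' =
      utm (e * e') (e 0 * a' + a * e' 1) (e 0 * b' + a * c' + b * e' 2) (e 1 * c' + c * e' 2) := by
  ext i j
  fin_cases i <;> fin_cases j <;> simp [utm, Matrix.mul_apply, Fin.sum_univ_three]

/-- The identity `p x y z x z y x q = p x z y x y z x q` for matrices sharing one `0`/`1` diagonal. -/
theorem utm_identity (e : Fin 3 → ℝ) (he : ∀ i, e i = 0 ∨ e i = 1)
    (p₁ p₂ p₃ x₁ x₂ x₃ y₁ y₂ y₃ z₁ z₂ z₃ q₁ q₂ q₃ : ℝ) :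
    utm e p₁ p₂ p₃ * (utm e x₁ x₂ x₃ * (utm e y₁ y₂ y₃ * (utm e z₁ z₂ z₃ * (utm e x₁ x₂ x₃ *
      (utm e z₁ z₂ z₃ * (utm e y₁ y₂ y₃ * (utm e x₁ x₂ x₃ * utm e q₁ q₂ q₃))))))) =
    utm e p₁ p₂ p₃ * (utm e x₁ x₂ x₃ * (utm e z₁ z₂ z₃ * (utm e y₁ y₂ y₃ * (utm e x₁ x₂ x₃ *
      (utm e y₁ y₂ y₃ * (utm e z₁ z₂ z₃ * (utm e x₁ x₂ x₃ * utm e q₁ q₂ q₃))))))) := by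
  simp only [utm_mul, Pi.mul_apply]
  rcases he 0 with h0 | h0 <;> rcases he 1 with h1 | h1 <;> rcases he 2 with h2 | h2 <;>
    rw [h0, h1, h2] <;> congr 1 <;> ring

/-! ### Identities as pairs of words -/

/-- The identity `s ≈ t` holds in `UT3pm`, with the two sides given as lists of letters. -/
def WordId (s t : List ℕ) : Prop :=
  ∀ f : ℕ → Matrix (Fin 3) (Fin 3) ℝ, (∀ n, f n ∈ UT3pm) → (s.map f).prod = (t.map f).prod

/-- The nonempty list of letters of an element of the free semigroup. -/
def letters (w : FreeSemigroup ℕ) : List ℕ := w.head :: w.tail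

theorem letters_mul (x y : FreeSemigroup ℕ) : letters (x * y) = letters x ++ letters y := rfl

theorem letters_injective : Function.Injective letters := by
  intro x y h
  simp only [letters, List.cons.injEq] at h
  exact FreeSemigroup.ext h.1 h.2

theorem letters_hom (φ : FreeSemigroup ℕ →ₙ* FreeSemigroup ℕ) (w : FreeSemigroup ℕ) :
    letters (φ w) = (letters w).flatMap fun n => letters (φ (FreeSemigroup.of n)) := by
  induction w with
  | ih1 x => simp [letters, FreeSemigroup.of]
  | ih2 x y hx hy => rw [map_mul, letters_mul, letters_mul, List.flatMap_append, hx, hy]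

theorem coe_hom (φ : FreeSemigroup ℕ →ₙ* UT3pm) (w : FreeSemigroup ℕ) :
    (φ w : Matrix (Fin 3) (Fin 3) ℝ) =
      ((letters w).map fun n => (φ (FreeSemigroup.of n) : Matrix (Fin 3) (Fin 3) ℝ)).prod := by
  induction w with
  | ih1 x => simp [letters, FreeSemigroup.of]
  | ih2 x y hx hy =>
    rw [map_mul, letters_mul, List.map_append, List.prod_append, ← hx, ← hy]; rfl

theorem satisfiesId_iff (s t : FreeSemigroup ℕ) :
    SatisfiesId UT3pm (s, t) ↔ WordId (letters s) (letters t) := by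
  constructor
  · intro h f hf
    have := congrArg Subtype.val (h (FreeSemigroup.lift fun n => ⟨f n, hf n⟩))
    rw [coe_hom, coe_hom] at this
    exact this
  · intro h φ
    apply Subtype.ext
    rw [coe_hom, coe_hom]
    exact h _ fun n => (φ (FreeSemigroup.of n)).2

/-! ### What an identity of `UT3pm` says about its two sides -/

theorem utm_mem (e : Fin 3 → ℝ) (he : ∀ i, e i = 0 ∨ e i = 1 ∨ e i = -1) (a b c : ℝ) :
    utm e a b c ∈ UT3pm := by
  refine ⟨fun i j hij => ?_, fun i => ?_⟩
  · fin_cases i <;> fin_cases j <;> simp_all [utm]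
  · have := he i
    fin_cases i <;> simpa [utm] using this

theorem one_eq_utm : (1 : Matrix (Fin 3) (Fin 3) ℝ) = utm 1 0 0 0 := by
  ext i j
  fin_cases i <;> fin_cases j <;> simp [utm]

theorem utm_inj {e e' : Fin 3 → ℝ} {a b c a' b' c' : ℝ} (h : utm e a b c = utm e' a' b' c') :
    a = a' ∧ b = b' ∧ c = c' :=
  ⟨by simpa [utm] using congrFun (congrFun h 0) 1, by simpa [utm] using congrFun (congrFun h 0) 2,
    by simpa [utm] using congrFun (congrFun h 1) 2⟩

/-- The two sides have the same letter counts: substitute unitriangular matrices. -/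
theorem WordId.perm {s t : List ℕ} (h : WordId s t) : s.Perm t := by
  rw [List.perm_iff_count]
  intro l
  have key : ∀ w : List ℕ, (w.map fun n => utm 1 (if n = l then 1 else 0) 0 0).prod =
      utm 1 (w.count l : ℝ) 0 0 := by
    intro w
    induction w with
    | nil => simp [one_eq_utm]
    | cons n w ih =>
      rw [List.map_cons, List.prod_cons, ih, utm_mul, List.count_cons]
      congr 1 <;> simp
  have h1 := h (fun n => utm 1 (if n = l then 1 else 0) 0 0)
    fun n => utm_mem _ (by simp) _ _ _
  rw [key, key] at h1
  exact_mod_cast (utm_inj h1).1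

/-- The two sides start with the same letter: substitute matrices with first diagonal entry `0`. -/
theorem WordId.head {a b : ℕ} {s t : List ℕ} (h : WordId (a :: s) (b :: t)) : a = b := by
  have key : ∀ w : List ℕ, ∃ e x y z, e 1 = 1 ∧
      (w.map fun n => utm ![0, 1, 1] (if n = a then 1 else 0) 0 0).prod = utm e x y z := by
    intro w
    induction w with
    | nil => exact ⟨1, 0, 0, 0, rfl, by simp [one_eq_utm]⟩
    | cons n w ih =>
      obtain ⟨e, x, y, z, he, ih⟩ := ih
      have h1 := utm_mul ![0, 1, 1] e (if n = a then 1 else 0) 0 0 x y z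
      rw [← ih, ← List.prod_cons] at h1
      exact ⟨_, _, _, _, by simp [he], h1⟩
  have h1 := h (fun n => utm ![0, 1, 1] (if n = a then 1 else 0) 0 0)
    fun n => utm_mem _ (fun i => by fin_cases i <;> simp) _ _ _
  obtain ⟨e, x, y, z, he, hs⟩ := key s
  obtain ⟨e', x', y', z', he', ht⟩ := key t
  rw [List.map_cons, List.prod_cons, List.map_cons, List.prod_cons, hs, ht, utm_mul, utm_mul] at h1
  have := (utm_inj h1).1
  by_contra hne
  simp [he, he', Ne.symm hne] at this

/-- The value of a word `w` under the homomorphism to `{0, 1, -1}` that sends the letter `n` to `d n`.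
These values record which letters occur in `w`, and the parities of their numbers of occurrences. -/
noncomputable def dchar (d : ℕ → SignType) (w : List ℕ) : ℝ :=
  (w.map fun n => ((d n : SignType) : ℝ)).prod

theorem dchar_nil (d : ℕ → SignType) : dchar d [] = 1 := rfl

theorem dchar_cons (d : ℕ → SignType) (n : ℕ) (w : List ℕ) :
    dchar d (n :: w) = (d n : ℝ) * dchar d w := by simp [dchar]

theorem dchar_append (d : ℕ → SignType) (u w : List ℕ) :
    dchar d (u ++ w) = dchar d u * dchar d w := by simp [dchar]

theorem dchar_perm (d : ℕ → SignType) {u w : List ℕ} (h : u.Perm w) : dchar d u = dchar d w :=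
  (h.map _).prod_eq

theorem dchar_one (w : List ℕ) : dchar 1 w = 1 := by
  induction w with
  | nil => rfl
  | cons n w ih => rw [dchar_cons, ih]; simp

theorem dchar_mul (d d' : ℕ → SignType) (w : List ℕ) :
    dchar (d * d') w = dchar d w * dchar d' w := by
  induction w with
  | nil => simp [dchar_nil]
  | cons n w ih =>
    have : ((d n * d' n : SignType) : ℝ) = (d n : ℝ) * (d' n : ℝ) :=
      map_mul (SignType.castHom (α := ℝ)) _ _
    rw [dchar_cons, dchar_cons, dchar_cons, ih, Pi.mul_apply, this]; ring

theorem dchar_update_zero (l : ℕ) (w : List ℕ) :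
    dchar (Function.update 1 l 0) w = if l ∈ w then 0 else 1 := by
  induction w with
  | nil => simp [dchar_nil]
  | cons n w ih =>
    rw [dchar_cons, ih]
    by_cases h : n = l
    · subst h; simp
    · simp [h, Ne.symm h]

theorem dchar_update_neg (l : ℕ) (w : List ℕ) :
    dchar (Function.update 1 l (-1)) w = (-1) ^ w.count l := by
  induction w with
  | nil => simp [dchar_nil]
  | cons n w ih =>
    rw [dchar_cons, ih]
    by_cases h : n = l
    · subst h; simp [pow_succ]
    · simp [h]

/-- A pair of words `(u, r)` viewed as a multiplicative character on pairs of sign assignments. -/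
noncomputable def pairChar (u r : List ℕ) : (ℕ → SignType) × (ℕ → SignType) →* ℝ where
  toFun d := dchar d.1 u * dchar d.2 r
  map_one' := by simp [dchar_one]
  map_mul' d d' := by simp only [Prod.fst_mul, Prod.snd_mul, dchar_mul]; ring

/-- By linear independence of characters, a character occurring in one of two equal sums of
characters also occurs in the other; no cancellation is possible since all coefficients are `1`. -/
theorem exists_eq_of_sum_eq {M ι κ : Type*} [Monoid M] (I : Finset ι) (J : Finset κ)
    (χ : ι → M →* ℝ) (ψ : κ → M →* ℝ) (h : ∀ m, ∑ i ∈ I, χ i m = ∑ j ∈ J, ψ j m)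
    {i₀ : ι} (hi : i₀ ∈ I) : ∃ j ∈ J, ψ j = χ i₀ := by
  classical
  by_contra! hne
  have h0 := linearIndependent_iff.1 (linearIndependent_monoidHom M ℝ)
    (∑ i ∈ I, Finsupp.single (χ i) 1 - ∑ j ∈ J, Finsupp.single (ψ j) 1) (by
      ext m
      simp [map_sub, map_sum, h m])
  have h1 := DFunLike.congr_fun h0 (χ i₀)
  simp only [Finsupp.coe_sub, Pi.sub_apply, Finsupp.finsetSum_apply, Finsupp.single_apply,
    Finsupp.coe_zero, Pi.zero_apply] at h1
  rw [Finset.sum_eq_zero (s := J) fun j hj => if_neg (hne j hj), sub_zero] at h1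
  have h2 : (1 : ℝ) ≤ ∑ i ∈ I, if χ i = χ i₀ then (1 : ℝ) else 0 := by
    have := Finset.single_le_sum (f := fun i => if χ i = χ i₀ then (1 : ℝ) else 0)
      (fun i _ => by positivity) hi
    simpa using this
  linarith

/-- The positions in `w` at which the two-letter factor `ab` starts. -/
def adjSet (a b : ℕ) (w : List ℕ) : Finset ℕ :=
  (Finset.range w.length).filter fun i => w[i]? = some a ∧ w[i + 1]? = some b

/-- With middle diagonal entry `0`, the `(1,3)` entry of a product is the sum, over the occurrences of
`ab`, of the character of the prefix before it times the character of the suffix after it. -/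
theorem adj_prod (a b : ℕ) (d₁ d₃ : ℕ → SignType) (w : List ℕ) :
    ∃ e x, e 1 = (if w = [] then 1 else 0) ∧ e 2 = dchar d₃ w ∧
    (w.map fun n => utm ![(d₁ n : ℝ), 0, (d₃ n : ℝ)]
        (if n = a then 1 else 0) 0 (if n = b then 1 else 0)).prod =
      utm e x (∑ i ∈ adjSet a b w, pairChar (w.take i) (w.drop (i + 2)) (d₁, d₃))
        (if w[0]? = some b then dchar d₃ (w.drop 1) else 0) := by
  induction w with
  | nil => exact ⟨1, 0, by simp, by simp [dchar_nil], by simp [one_eq_utm, adjSet]⟩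
  | cons n w ih =>
    obtain ⟨e, x, he1, he2, ih⟩ := ih
    refine ⟨![(d₁ n : ℝ), 0, (d₃ n : ℝ)] * e, (d₁ n : ℝ) * x + (if n = a then 1 else 0) * e 1,
      by simp, by simp [he2, dchar_cons], ?_⟩
    rw [List.map_cons, List.prod_cons, ih, utm_mul]
    congr 1
    · simp only [adjSet, Finset.sum_filter, List.length_cons, Finset.sum_range_succ',
        Finset.mul_sum, pairChar]
      simp [dchar_nil, dchar_cons]
      congr 1
      · apply Finset.sum_congr rfl
        intro i _
        split_ifs <;> ring
      · split_ifs <;> simp_all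
    · simp [he2]

/-- Each occurrence of a two-letter factor in `t` is matched by an occurrence in `s` whose prefix and
suffix cannot be told apart from those in `t` by homomorphisms to `{0, 1, -1}`. -/
theorem WordId.adj {s t : List ℕ} (h : WordId s t) {i a b : ℕ} (ha : t[i]? = some a)
    (hb : t[i + 1]? = some b) :
    ∃ j, s[j]? = some a ∧ s[j + 1]? = some b ∧ (∀ d, dchar d (s.take j) = dchar d (t.take i)) ∧
      ∀ d, dchar d (s.drop (j + 2)) = dchar d (t.drop (i + 2)) := by
  have hi : i ∈ adjSet a b t := by
    have : i < t.length := (List.getElem?_eq_some_iff.1 ha).1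
    exact Finset.mem_filter.2 ⟨Finset.mem_range.2 this, ha, hb⟩
  obtain ⟨j, hj, hjeq⟩ := exists_eq_of_sum_eq (adjSet a b t) (adjSet a b s)
    (fun i => pairChar (t.take i) (t.drop (i + 2))) (fun i => pairChar (s.take i) (s.drop (i + 2)))
    (by
      rintro ⟨d₁, d₃⟩
      have h1 := h (fun n => utm ![(d₁ n : ℝ), 0, (d₃ n : ℝ)]
        (if n = a then 1 else 0) 0 (if n = b then 1 else 0)) fun n => utm_mem _ (by
          have hsg : ∀ x : SignType, (x : ℝ) = 0 ∨ (x : ℝ) = 1 ∨ (x : ℝ) = -1 := by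
            intro x; cases x <;> simp
          intro k
          fin_cases k
          · exact hsg _
          · simp
          · exact hsg _) _ _ _
      obtain ⟨e, x, -, -, hs⟩ := adj_prod a b d₁ d₃ s
      obtain ⟨e', x', -, -, ht⟩ := adj_prod a b d₁ d₃ t
      rw [hs, ht] at h1
      exact (utm_inj h1).2.1.symm) hi
  simp only [adjSet, Finset.mem_filter] at hj
  refine ⟨j, hj.2.1, hj.2.2, fun d => ?_, fun d => ?_⟩
  · simpa [pairChar, dchar_one] using DFunLike.congr_fun hjeq (d, 1)
  · simpa [pairChar, dchar_one] using DFunLike.congr_fun hjeq (1, d)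

/-- The word `s` returns to a letter `a` over a segment `m` that contains `a` again, and each letter
of `a m` occurs at least four times in `s`. -/
def HasFold (s : List ℕ) : Prop :=
  ∃ u a m r, s = u ++ a :: (m ++ a :: r) ∧ a ∈ m ∧ ∀ b ∈ a :: m, 4 ≤ s.count b

/-- If two positions in `s` carry the same letter and have indistinguishable prefixes and
indistinguishable suffixes, then each letter of the segment from the first position up to the
second occurs an even number of times in it and also occurs on both sides, so `s` has a fold. -/
theorem hasFold_of_char {s : List ℕ} {i j a : ℕ} (hij : i < j) (hi : s[i]? = some a)
    (hj : s[j]? = some a) (hp : ∀ d, dchar d (s.take i) = dchar d (s.take j))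
    (hr : ∀ d, dchar d (s.drop (i + 1)) = dchar d (s.drop (j + 1))) : HasFold s := by
  obtain ⟨hi', rfl⟩ := List.getElem?_eq_some_iff.1 hi
  obtain ⟨hj', hja⟩ := List.getElem?_eq_some_iff.1 hj
  obtain ⟨c, rfl⟩ := Nat.exists_eq_add_of_lt hij
  set a := s[i] with ha
  set u := s.take i with hu
  set m := (s.drop (i + 1)).take c with hm
  set r := s.drop (i + c + 1 + 1) with hrr
  have e1 : s.drop (i + 1) = m ++ a :: r := by
    rw [hm, hrr, ← hja, List.getElem_cons_drop]
    conv_lhs => rw [← List.take_append_drop c (s.drop (i + 1)), List.drop_drop]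
    congr 2; omega
  have e2 : s = u ++ a :: (m ++ a :: r) := by
    rw [← e1, ha, List.getElem_cons_drop, hu, List.take_append_drop]
  have e3 : s.take (i + c + 1) = u ++ a :: m := by
    have hl : u.length = i := by simp [hu]; omega
    have hl2 : m.length = c := by simp [hm]; omega
    have : u ++ a :: (m ++ a :: r) = (u ++ a :: m) ++ a :: r := by simp
    rw [e2, this]
    apply List.take_left'
    simp [hl, hl2]; omega
  rw [e3] at hp
  rw [e1] at hr
  have hcnt : ∀ b ∈ a :: m, b ∈ u ∧ b ∈ r ∧ 2 ≤ (a :: m).count b := by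
    intro b hb
    have h1 := hp (Function.update 1 b 0)
    rw [dchar_update_zero, dchar_update_zero, if_pos (List.mem_append_right _ hb)] at h1
    have h2 := hr (Function.update 1 b 0)
    have hb' : b ∈ m ++ a :: r := by simp at hb ⊢; tauto
    rw [dchar_update_zero, dchar_update_zero, if_pos hb'] at h2
    have h3 := hp (Function.update 1 b (-1))
    rw [dchar_append, dchar_update_neg, dchar_update_neg] at h3
    have h4 : (1 : ℝ) = (-1) ^ (a :: m).count b := by
      apply mul_left_cancel₀ (pow_ne_zero (u.count b) (by norm_num : (-1 : ℝ) ≠ 0))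
      rw [mul_one]; exact h3
    have h5 : Even ((a :: m).count b) := neg_one_pow_eq_one_iff_even (by norm_num) |>.1 h4.symm
    have h6 : 0 < (a :: m).count b := List.count_pos_iff.2 hb
    refine ⟨by_contra fun h => ?_, by_contra fun h => ?_, ?_⟩
    · simp [h] at h1
    · simp [h] at h2
    · obtain ⟨k, hk⟩ := h5; omega
  refine ⟨u, a, m, r, e2, ?_, fun b hb => ?_⟩
  · have := (hcnt a (by simp)).2.2
    rw [List.count_cons_self] at this
    exact List.count_pos_iff.1 (by omega)
  · obtain ⟨h1, h2, h3⟩ := hcnt b hb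
    have h1' := List.count_pos_iff.2 h1
    have h2' := List.count_pos_iff.2 h2
    rw [e2]
    have : u ++ a :: (m ++ a :: r) = u ++ ((a :: m) ++ ([a] ++ r)) := by simp
    rw [this, List.count_append, List.count_append, List.count_append]
    omega

/-- A word without a fold is an isoterm: no identity of `UT3pm` changes it. The prefixes of `s` and
`t` are compared letter by letter; if they agree up to the letter at position `i`, the matching
occurrence in `s` of the next two-letter factor of `t` must again be at position `i`. -/
theorem WordId.eq_of_not_hasFold {s t : List ℕ} (hs : s ≠ []) (h : WordId s t)
    (hf : ¬ HasFold s) : s = t := by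
  have hperm := h.perm
  have hlen := hperm.length_eq
  have key : ∀ i, i ≤ s.length → s.take i = t.take i := by
    intro i
    induction i with
    | zero => simp
    | succ i ih =>
      intro hi
      have ih := ih (by omega)
      rcases i with _ | i
      · obtain ⟨a, s', rfl⟩ := List.exists_cons_of_ne_nil hs
        obtain ⟨b, t', rfl⟩ := List.exists_cons_of_ne_nil (l := t) (by
          rintro rfl; simp at hlen)
        simp [h.head]
      · have hti : t[i]? = some t[i] := List.getElem?_eq_getElem _
        have htj : t[i + 1]? = some t[i + 1] := List.getElem?_eq_getElem _
        obtain ⟨j, hj1, hj2, hj3, hj4⟩ := h.adj hti htj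
        have hsi : s[i]? = some t[i] := by
          rw [← hti]
          have := congrArg (fun l => l[i]?) ih
          simpa [List.getElem?_take] using this
        have htake : s.take i = t.take i := by
          have := congrArg (List.take i) ih
          simpa [List.take_take] using this
        have hd : ∀ d, dchar d (s.drop (i + 1)) = dchar d (s.drop (j + 1)) := by
          intro d
          have hp : (s.drop (i + 1)).Perm (t.drop (i + 1)) := by
            rw [← List.perm_append_left_iff (s.take (i + 1)), List.take_append_drop, ih,
              List.take_append_drop]
            exact hperm
          obtain ⟨hjl, hj2'⟩ := List.getElem?_eq_some_iff.1 hj2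
          rw [dchar_perm d hp, ← List.getElem_cons_drop (show i + 1 < t.length by omega),
            ← List.getElem_cons_drop hjl, dchar_cons, dchar_cons, hj2', hj4]
        have hpre : ∀ d, dchar d (s.take i) = dchar d (s.take j) := fun d => by
          rw [hj3, htake]
        rcases lt_trichotomy i j with hlt | rfl | hlt
        · exact (hf (hasFold_of_char hlt hsi hj1 hpre hd)).elim
        · rw [List.take_add_one, ih, hj2, List.take_add_one (l := t) (i := i + 1), htj]
        · exact (hf (hasFold_of_char hlt hj1 hsi (fun d => (hpre d).symm)
            fun d => (hd d).symm)).elim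
  have := key s.length le_rfl
  rwa [List.take_length, hlen, List.take_length] at this

theorem card_adjSet_append (a b : ℕ) (u w : List ℕ) :
    (adjSet a b u).card + (adjSet a b w).card ≤ (adjSet a b (u ++ w)).card := by
  simp only [adjSet, Finset.card_filter, List.length_append, Finset.sum_range_add]
  apply add_le_add
  · apply Finset.sum_le_sum
    intro i _
    split_ifs with h1 h2
    · exact le_rfl
    · refine (h2 ⟨?_, ?_⟩).elim
      · rw [List.getElem?_append_left (List.getElem?_eq_some_iff.1 h1.1).1, h1.1]
      · rw [List.getElem?_append_left (List.getElem?_eq_some_iff.1 h1.2).1, h1.2]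
    · exact Nat.zero_le _
    · exact le_rfl
  · apply le_of_eq
    apply Finset.sum_congr rfl
    intro i _
    rw [List.getElem?_append_right (by omega), List.getElem?_append_right (by omega),
      Nat.add_sub_cancel_left, show u.length + i + 1 - u.length = i + 1 by omega]

theorem count_le_card_adjSet {a b c : ℕ} {l : List ℕ} (f : ℕ → List ℕ) (hc : f c = a :: b :: l)
    (s : List ℕ) : s.count c ≤ (adjSet a b (s.flatMap f)).card := by
  induction s with
  | nil => simp
  | cons n s ih =>
    rw [List.flatMap_cons, List.count_cons]
    refine le_trans ?_ (card_adjSet_append a b (f n) (s.flatMap f))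
    by_cases h : n = c
    · subst h
      have : 0 < (adjSet a b (f n)).card := Finset.card_pos.2 ⟨0, by simp [adjSet, hc]⟩
      simp; omega
    · simp [h]; omega

/-! ### Words made of arithmetic progressions modulo a prime -/

/-- The arithmetic progression `0, j, 2j, …, (k - 1)j` modulo `k`. -/
def block (k j : ℕ) : List ℕ := (List.range k).map fun x => j * x % k

/-- The concatenation of the progressions modulo `k` with the strides listed in `js`. -/
def blocks (k : ℕ) (js : List ℕ) : List ℕ := js.flatMap (block k)

theorem blocks_getElem? {k : ℕ} (hk : 0 < k) (js : List ℕ) (n : ℕ) :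
    (blocks k js)[n]? = (js[n / k]?).map fun j => j * (n % k) % k := by
  induction js generalizing n with
  | nil => simp [blocks]
  | cons j js ih =>
    have hl : (block k j).length = k := by simp [block]
    rw [blocks, List.flatMap_cons, ← blocks]
    rcases lt_or_ge n k with h | h
    · rw [List.getElem?_append_left (by omega), Nat.div_eq_of_lt h, Nat.mod_eq_of_lt h]
      simp [block, h]
    · obtain ⟨n, rfl⟩ := Nat.exists_eq_add_of_le h
      rw [List.getElem?_append_right (by omega), hl, Nat.add_sub_cancel_left, ih,
        Nat.add_div_left _ hk, Nat.add_mod_left]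
      simp

theorem blocks_some {k : ℕ} (hk : 0 < k) {js : List ℕ} {n a : ℕ}
    (h : (blocks k js)[n]? = some a) : ∃ j, js[n / k]? = some j ∧ j ∈ js ∧ j * (n % k) % k = a := by
  rw [blocks_getElem? hk, Option.map_eq_some_iff] at h
  obtain ⟨j, h1, h2⟩ := h
  exact ⟨j, h1, List.mem_of_getElem? h1, h2⟩

/-- Two consecutive letters of `blocks k js` differ by the stride of the block of the first one. This
also holds across block boundaries, because every block starts with `0` and would return to `0`
after its last letter. -/
theorem blocks_adj {k : ℕ} (hk : 0 < k) {js : List ℕ} {n a b : ℕ}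
    (h : (blocks k js)[n]? = some a) (h' : (blocks k js)[n + 1]? = some b) :
    ∃ j, js[n / k]? = some j ∧ j ∈ js ∧ ((j * (n % k) : ℕ) : ZMod k) = a ∧
      (b : ZMod k) = a + j := by
  obtain ⟨j, h1, h2, h3⟩ := blocks_some hk h
  obtain ⟨j', h1', h2', h3'⟩ := blocks_some hk h'
  have ha : ((j * (n % k) : ℕ) : ZMod k) = a := by rw [← h3, ZMod.natCast_mod]
  refine ⟨j, h1, h2, ha, ?_⟩
  rw [← h3', ZMod.natCast_mod, ← ha]
  have hlt := Nat.mod_lt n hk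
  rcases Nat.lt_or_ge (n % k + 1) k with hc | hc
  · have e1 : (n + 1) / k = n / k := by
      rw [Nat.div_eq_iff hk]
      have := Nat.div_add_mod n k
      rw [Nat.mul_comm] at this
      omega
    have e2 : (n + 1) % k = n % k + 1 := by
      rw [Nat.add_mod, Nat.mod_eq_of_lt (a := 1) (by omega), Nat.mod_eq_of_lt hc]
    rw [e1, h1] at h1'
    cases h1'
    rw [e2]; push_cast; ring
  · have e2 : (n + 1) % k = 0 := by
      have e3 : n % k + 1 = k := by omega
      have := Nat.div_add_mod n k
      rw [← this, add_assoc, e3]; simp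
    have e4 : ((n % k : ℕ) : ZMod k) + 1 = 0 := by
      have e3 : n % k + 1 = k := by omega
      have := congrArg (Nat.cast (R := ZMod k)) e3
      simpa using this
    rw [e2]; push_cast
    linear_combination (-(j : ZMod k)) * e4

theorem mod_eq_of_block_eq {k j x y : ℕ} (hk : k.Prime) (hj : 0 < j) (hjk : j < k) (hx : x < k)
    (hy : y < k) (h : ((j * x : ℕ) : ZMod k) = (j * y : ℕ)) : x = y := by
  have := Fact.mk hk
  push_cast at h
  have hj0 : (j : ZMod k) ≠ 0 := by
    rw [Ne, ZMod.natCast_eq_zero_iff]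
    exact Nat.not_dvd_of_pos_of_lt hj hjk
  have h1 := mul_left_cancel₀ hj0 h
  rw [ZMod.natCast_eq_natCast_iff] at h1
  exact Nat.ModEq.eq_of_lt_of_lt h1 hx hy

/-- A two-letter factor determines the stride, and occurs at most once in each block with that stride. -/
theorem card_adjSet_blocks {k : ℕ} (hk : k.Prime) {js : List ℕ} (hjs : ∀ j ∈ js, 0 < j ∧ j < k)
    {c : ℕ} (hc : ∀ j ∈ js,
      ((Finset.range js.length).filter fun r => js[r]? = some j).card ≤ c) (a b : ℕ) :
    (adjSet a b (blocks k js)).card ≤ c := by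
  rcases (adjSet a b (blocks k js)).eq_empty_or_nonempty with h0 | ⟨n₀, hn₀⟩
  · simp [h0]
  simp only [adjSet, Finset.mem_filter] at hn₀
  obtain ⟨j, -, hj, -, hab⟩ := blocks_adj hk.pos hn₀.2.1 hn₀.2.2
  have key : ∀ n ∈ adjSet a b (blocks k js),
      js[n / k]? = some j ∧ ((j * (n % k) : ℕ) : ZMod k) = a := by
    intro n hn
    simp only [adjSet, Finset.mem_filter] at hn
    obtain ⟨j', h1, h2, h3, h4⟩ := blocks_adj hk.pos hn.2.1 hn.2.2
    have : (j' : ZMod k) = j := by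
      rw [h4] at hab; exact add_left_cancel hab
    rw [ZMod.natCast_eq_natCast_iff] at this
    have := Nat.ModEq.eq_of_lt_of_lt this (hjs _ h2).2 (hjs _ hj).2
    subst this
    exact ⟨h1, h3⟩
  refine le_trans (Finset.card_le_card_of_injOn (fun n => n / k) ?_ ?_) (hc j hj)
  · intro n hn
    have := (key n hn).1
    simp only [Finset.coe_filter, Finset.mem_range, Set.mem_ofPred_eq]
    exact ⟨(List.getElem?_eq_some_iff.1 this).1, this⟩
  · intro n hn m hm hnm
    have h1 := (key n hn).2.trans (key m hm).2.symm
    have h2 := mod_eq_of_block_eq hk (hjs j hj).1 (hjs j hj).2 (Nat.mod_lt _ hk.pos)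
      (Nat.mod_lt _ hk.pos) h1
    rw [← Nat.div_add_mod n k, ← Nat.div_add_mod m k, h2]
    simp only at hnm
    rw [hnm]

/-- A letter occurs at most once per block, so different occurrences lie in different blocks. -/
theorem div_lt_of_blocks_eq {k : ℕ} (hk : k.Prime) {js : List ℕ} (hjs : ∀ j ∈ js, 0 < j ∧ j < k)
    {n m a : ℕ} (hnm : n < m) (hn : (blocks k js)[n]? = some a)
    (hm : (blocks k js)[m]? = some a) : n / k < m / k := by
  refine lt_of_le_of_ne (Nat.div_le_div_right hnm.le) fun he => ?_
  obtain ⟨j, h1, h2, h3⟩ := blocks_some hk.pos hn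
  obtain ⟨j', h1', h2', h3'⟩ := blocks_some hk.pos hm
  rw [← he, h1] at h1'
  cases h1'
  have h4 : ((j * (n % k) : ℕ) : ZMod k) = (j * (m % k) : ℕ) := by
    rw [ZMod.natCast_eq_natCast_iff]; exact h3.trans h3'.symm
  have h5 := mod_eq_of_block_eq hk (hjs j h2).1 (hjs j h2).2 (Nat.mod_lt _ hk.pos)
      (Nat.mod_lt _ hk.pos) h4
  have := Nat.div_add_mod n k
  have := Nat.div_add_mod m k
  rw [he, h5] at *
  omega

/-- Let `s` be a word of length at most `k` with a substitution image that is a factor of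
`blocks k js`, where every stride is used at most three times. A letter occurring four times in `s`
must be sent to a single letter. A fold in `s` would thus give a factor of length at most `k` of
`blocks k js` containing some letter three times, hence meeting three blocks, including all of the
middle one; this is impossible. -/
theorem not_hasFold_of_factor {k : ℕ} (hk : k.Prime) {js : List ℕ}
    (hjs : ∀ j ∈ js, 0 < j ∧ j < k)
    (hc : ∀ j ∈ js, ((Finset.range js.length).filter fun r => js[r]? = some j).card ≤ 3)
    {s : List ℕ} (hs : s.length ≤ k) (f : ℕ → List ℕ) (hf : ∀ n, f n ≠ [])
    (hinf : s.flatMap f <:+: blocks k js) : ¬ HasFold s := by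
  rintro ⟨u, a, m, r, rfl, ham, hfour⟩
  obtain ⟨α, β, hU⟩ := hinf
  have hone : ∀ b ∈ a :: m, ∃ g, f b = [g] := by
    intro b hb
    rcases hfb : f b with _ | ⟨x, _ | ⟨y, l⟩⟩
    · exact (hf b hfb).elim
    · exact ⟨x, rfl⟩
    · have h1 := count_le_card_adjSet f hfb (u ++ a :: (m ++ a :: r))
      have h2 := card_adjSet_blocks hk hjs hc x y
      have h3 := card_adjSet_append x y (α ++ (u ++ a :: (m ++ a :: r)).flatMap f) β
      have h4 := card_adjSet_append x y α ((u ++ a :: (m ++ a :: r)).flatMap f)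
      rw [hU] at h3
      have h5 := hfour b hb
      omega
  obtain ⟨g, hg⟩ := hone a (by simp)
  have hlen : ∀ l : List ℕ, (∀ b ∈ l, b ∈ a :: m) → (l.flatMap f).length = l.length := by
    intro l
    induction l with
    | nil => simp
    | cons b l ih =>
      intro h
      obtain ⟨g', hg'⟩ := hone b (h b (by simp))
      rw [List.flatMap_cons, List.length_append, ih fun c hc => h c (by simp [hc]), hg']
      simp; omega
  obtain ⟨m₁, m₂, rfl⟩ := List.append_of_mem ham
  have hl1 := hlen m₁ fun b hb => by simp [hb]
  have hl2 := hlen m₂ fun b hb => by simp [hb]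
  simp only [List.length_append, List.length_cons] at hs
  simp only [List.flatMap_append, List.flatMap_cons, hg] at hU
  set A := α ++ u.flatMap f with hA
  set M₁ := m₁.flatMap f
  set M₂ := m₂.flatMap f
  have hU' : blocks k js = A ++ g :: (M₁ ++ g :: (M₂ ++ g :: (r.flatMap f ++ β))) := by
    rw [← hU]; simp [hA]
  have p1 : (blocks k js)[A.length]? = some g := by rw [hU']; simp
  have p2 : (blocks k js)[A.length + M₁.length + 1]? = some g := by
    rw [hU', List.getElem?_append_right (by omega)]
    rw [show A.length + M₁.length + 1 - A.length = M₁.length + 1 by omega]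
    simp
  have p3 : (blocks k js)[A.length + M₁.length + 1 + M₂.length + 1]? = some g := by
    rw [hU', List.getElem?_append_right (by omega)]
    rw [show A.length + M₁.length + 1 + M₂.length + 1 - A.length = M₁.length + (M₂.length + 1) + 1
      by omega]
    simp
  have q1 := div_lt_of_blocks_eq hk hjs (by omega) p1 p2
  have q2 := div_lt_of_blocks_eq hk hjs (by omega) p2 p3
  set n := A.length
  have q3 : n / k + 2 ≤ (n + k) / k + 0 := by
    refine le_trans (by omega) (Nat.div_le_div_right
      (show n + M₁.length + 1 + M₂.length + 1 ≤ n + k by omega))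
  rw [Nat.add_div_right _ hk.pos] at q3
  omega

/-! ### A long identity of `UT3pm` -/

theorem block_perm {k j : ℕ} (hk : k.Prime) (hj : 0 < j) (hjk : j < k) :
    (block k j).Perm (List.range k) := by
  have hnd : (block k j).Nodup := by
    refine List.Nodup.map_on ?_ List.nodup_range
    intro x hx y hy hxy
    refine mod_eq_of_block_eq hk hj hjk (List.mem_range.1 hx) (List.mem_range.1 hy) ?_
    rw [ZMod.natCast_eq_natCast_iff]; exact hxy
  refine (List.subperm_of_subset hnd ?_).perm_of_length_le (by simp [block])
  intro x hx
  simp only [block, List.mem_map] at hx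
  obtain ⟨y, -, rfl⟩ := hx
  exact List.mem_range.2 (Nat.mod_lt _ hk.pos)

theorem prod_eq_utm (f : ℕ → Matrix (Fin 3) (Fin 3) ℝ) (hf : ∀ n, f n ∈ UT3pm) (w : List ℕ) :
    ∃ a b c, (w.map f).prod = utm (fun i => (w.map fun n => f n i i).prod) a b c := by
  induction w with
  | nil => exact ⟨0, 0, 0, by simp only [List.map_nil, List.prod_nil]; exact one_eq_utm⟩
  | cons n w ih =>
    obtain ⟨a, b, c, ih⟩ := ih
    have h1 : f n = utm (fun i => f n i i) (f n 0 1) (f n 0 2) (f n 1 2) := by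
      ext i j
      have := (hf n).1
      fin_cases i <;> fin_cases j <;> simp [utm] <;> apply this <;> simp
    have h2 := utm_mul (fun i => f n i i) (fun i => (w.map fun n => f n i i).prod)
      (f n 0 1) (f n 0 2) (f n 1 2) a b c
    rw [← h1, ← ih, ← List.prod_cons] at h2
    exact ⟨_, _, _, h2⟩

theorem prod_diag (f : ℕ → Matrix (Fin 3) (Fin 3) ℝ) (hf : ∀ n, f n ∈ UT3pm) (i : Fin 3)
    (w : List ℕ) : (w.map fun n => f n i i).prod ^ 2 = 0 ∨ (w.map fun n => f n i i).prod ^ 2 = 1 := by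
  induction w with
  | nil => simp
  | cons n w ih =>
    rw [List.map_cons, List.prod_cons, mul_pow]
    rcases (hf n).2 i with h | h | h <;> rw [h] <;> simpa using ih

/-- The strides of the left side of the long identity: the pattern `p x y z x z y x q`, where each
variable stands for two consecutive blocks. Doubling makes the diagonal entries squares. -/
def strides : List ℕ := [7, 8, 1, 2, 3, 4, 5, 6, 1, 2, 5, 6, 3, 4, 1, 2, 9, 10]

/-- The strides of the right side of the long identity: the pattern `p x z y x y z x q`. -/
def strides' : List ℕ := [7, 8, 1, 2, 5, 6, 3, 4, 1, 2, 3, 4, 5, 6, 1, 2, 9, 10]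

/-- All blocks are permutations of each other, so their values have the same diagonal, and products of
two blocks have the same `0`/`1` diagonal. Then `utm_identity` applies. -/
theorem wordId_blocks {k : ℕ} (hk : k.Prime) (h10 : 10 < k) :
    WordId (blocks k strides) (blocks k strides') := by
  intro f hf
  set e : Fin 3 → ℝ := fun i => ((List.range k).map fun n => f n i i).prod ^ 2
  have he : ∀ i, e i = 0 ∨ e i = 1 := fun i => prod_diag f hf i _
  have hB : ∀ j, 0 < j → j < k → ∃ a b c, ((block k j).map f).prod =
      utm (fun i => ((List.range k).map fun n => f n i i).prod) a b c := by
    intro j h0 h1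
    obtain ⟨a, b, c, h⟩ := prod_eq_utm f hf (block k j)
    refine ⟨a, b, c, h.trans ?_⟩
    congr 1
    ext i
    exact ((block_perm hk h0 h1).map _).prod_eq
  have hP : ∀ j j', 0 < j → j < k → 0 < j' → j' < k →
      ∃ a b c, ((block k j ++ block k j').map f).prod = utm e a b c := by
    intro j j' h0 h1 h0' h1'
    obtain ⟨a, b, c, h⟩ := hB j h0 h1
    obtain ⟨a', b', c', h'⟩ := hB j' h0' h1'
    have h2 := congrArg₂ (· * ·) h h'
    simp only [utm_mul, ← List.prod_append, ← List.map_append] at h2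
    refine ⟨_, _, _, h2.trans (congrArg (fun D => utm D _ _ _) ?_)⟩
    ext i
    simp [e, sq]
  obtain ⟨p₁, p₂, p₃, hp⟩ := hP 7 8 (by omega) (by omega) (by omega) (by omega)
  obtain ⟨x₁, x₂, x₃, hx⟩ := hP 1 2 (by omega) (by omega) (by omega) (by omega)
  obtain ⟨y₁, y₂, y₃, hy⟩ := hP 3 4 (by omega) (by omega) (by omega) (by omega)
  obtain ⟨z₁, z₂, z₃, hz⟩ := hP 5 6 (by omega) (by omega) (by omega) (by omega)
  obtain ⟨q₁, q₂, q₃, hq⟩ := hP 9 10 (by omega) (by omega) (by omega) (by omega)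
  have e1 : blocks k strides = (block k 7 ++ block k 8) ++ ((block k 1 ++ block k 2) ++
      ((block k 3 ++ block k 4) ++ ((block k 5 ++ block k 6) ++ ((block k 1 ++ block k 2) ++
      ((block k 5 ++ block k 6) ++ ((block k 3 ++ block k 4) ++ ((block k 1 ++ block k 2) ++
      (block k 9 ++ block k 10)))))))) := by
    simp [blocks, strides]
  have e2 : blocks k strides' = (block k 7 ++ block k 8) ++ ((block k 1 ++ block k 2) ++
      ((block k 5 ++ block k 6) ++ ((block k 3 ++ block k 4) ++ ((block k 1 ++ block k 2) ++
      ((block k 3 ++ block k 4) ++ ((block k 5 ++ block k 6) ++ ((block k 1 ++ block k 2) ++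
      (block k 9 ++ block k 10)))))))) := by
    simp [blocks, strides']
  have hm : ∀ u w : List ℕ, ((u ++ w).map f).prod = (u.map f).prod * (w.map f).prod := by simp
  rw [e1, e2]
  generalize block k 7 ++ block k 8 = P at *
  generalize block k 1 ++ block k 2 = X at *
  generalize block k 3 ++ block k 4 = Y at *
  generalize block k 5 ++ block k 6 = Z at *
  generalize block k 9 ++ block k 10 = Q at *
  simp only [hm, hp, hx, hy, hz, hq]
  exact utm_identity e he _ _ _ _ _ _ _ _ _ _ _ _ _ _ _

theorem blocks_ne {k : ℕ} (h10 : 10 < k) : blocks k strides ≠ blocks k strides' := by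
  intro h
  -- The second letters of the fifth blocks are the strides `3` and `5`.
  have h1 := congrArg (fun l => l[4 * k + 1]?) h
  have e1 : (4 * k + 1) / k = 4 := by
    rw [Nat.div_eq_iff (by omega)]; omega
  have e2 : (4 * k + 1) % k = 1 := by
    rw [Nat.mul_add_mod_self_right, Nat.mod_eq_of_lt (by omega)]
  simp only [blocks_getElem? (show 0 < k by omega), e1, e2] at h1
  simp [strides, strides', Nat.mod_eq_of_lt (show 3 < k by omega),
    Nat.mod_eq_of_lt (show 5 < k by omega)] at h1

/-! ### The separating semigroup -/

/-- The congruence on the free semigroup that identifies all words that are not factors of `U`, and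
nothing else: the Rees congruence of the ideal of non-factors. -/
def factorCon (U : List ℕ) : Con (FreeSemigroup ℕ) where
  r w w' := w = w' ∨ (¬ letters w <:+: U ∧ ¬ letters w' <:+: U)
  iseqv := by
    refine ⟨fun _ => Or.inl rfl, ?_, ?_⟩
    · rintro x y (rfl | h)
      · exact Or.inl rfl
      · exact Or.inr h.symm
    · rintro x y z (rfl | h) (rfl | h')
      · exact Or.inl rfl
      · exact Or.inr h'
      · exact Or.inr h
      · exact Or.inr ⟨h.1, h'.2⟩
  mul' := by
    have hl : ∀ x y, ¬ letters x <:+: U → ¬ letters (x * y) <:+: U := fun x y h h' =>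
      h ((List.prefix_append _ _).isInfix.trans (letters_mul x y ▸ h'))
    have hr : ∀ x y, ¬ letters y <:+: U → ¬ letters (x * y) <:+: U := fun x y h h' =>
      h ((List.suffix_append _ _).isInfix.trans (letters_mul x y ▸ h'))
    rintro w x y z (rfl | h) (rfl | h')
    · exact Or.inl rfl
    · exact Or.inr ⟨hr _ _ h'.1, hr _ _ h'.2⟩
    · exact Or.inr ⟨hl _ _ h.1, hl _ _ h.2⟩
    · exact Or.inr ⟨hl _ _ h.1, hl _ _ h.2⟩

/-- The quotient by `factorCon U` satisfies `s ≈ t` as soon as `s` and `t` coincide or no substitution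
image of either is a factor of `U`. -/
theorem factorCon_satisfiesId {U : List ℕ} {s t : FreeSemigroup ℕ}
    (h : ∀ φ : FreeSemigroup ℕ →ₙ* FreeSemigroup ℕ,
      letters (φ s) <:+: U ∨ letters (φ t) <:+: U → s = t) :
    SatisfiesId (factorCon U).Quotient (s, t) := by
  intro ψ
  choose g hg using fun n => Quotient.exists_rep (ψ (FreeSemigroup.of n))
  let π : FreeSemigroup ℕ →ₙ* (factorCon U).Quotient :=
    ⟨fun w => (w : (factorCon U).Quotient), fun _ _ => rfl⟩
  have hψ : ψ = π.comp (FreeSemigroup.lift g) := by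
    apply FreeSemigroup.hom_ext
    funext n
    exact (hg n).symm
  by_cases hst : letters (FreeSemigroup.lift g s) <:+: U ∨ letters (FreeSemigroup.lift g t) <:+: U
  · simp only [h _ hst]
  · push Not at hst
    rw [hψ]
    exact (Con.eq _).2 (Or.inr hst)

/-- `UT₃^±(ℝ)` is nonfinitely based: no finite set of identities holding in `UT₃^±(ℝ)`
implies all identities holding in `UT₃^±(ℝ)`. -/
theorem UT3pm_real_nonfinitely_based :
    ¬ ∃ Sgm : Finset (FreeSemigroup ℕ × FreeSemigroup ℕ),
      (∀ e ∈ Sgm, SatisfiesId ↥UT3pm e) ∧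
      (∀ e, SatisfiesId ↥UT3pm e → FollowsFrom (↑Sgm) e) := by
  rintro ⟨Sgm, hS, hall⟩
  obtain ⟨k, hkL, hk⟩ := Nat.exists_infinite_primes
    (11 + ∑ e ∈ Sgm, ((letters e.1).length + (letters e.2).length))
  have hk10 : 10 < k := by omega
  have hk0 : 0 < k := by omega
  have hlen : ∀ e ∈ Sgm, (letters e.1).length ≤ k ∧ (letters e.2).length ≤ k := by
    intro e he
    have := Finset.single_le_sum
      (f := fun e : FreeSemigroup ℕ × FreeSemigroup ℕ =>
        (letters e.1).length + (letters e.2).length) (fun _ _ => Nat.zero_le _) he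
    omega
  have hjs : ∀ j ∈ strides, 0 < j ∧ j < k := by
    have : ∀ j ∈ strides, 0 < j ∧ j < 11 := by decide
    exact fun j hj => ⟨(this j hj).1, by have := (this j hj).2; omega⟩
  have hc : ∀ j ∈ strides,
      ((Finset.range strides.length).filter fun r => strides[r]? = some j).card ≤ 3 := by decide
  have hmk : ∀ js : List ℕ, js ≠ [] → ∃ w : FreeSemigroup ℕ, letters w = blocks k js := by
    intro js hne
    obtain ⟨j, js, rfl⟩ := List.exists_cons_of_ne_nil hne
    obtain ⟨a, l, h⟩ := List.exists_cons_of_ne_nil (l := blocks k (j :: js)) (by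
      rw [← List.length_pos_iff]
      simp [blocks, block, hk0])
    exact ⟨⟨a, l⟩, h.symm⟩
  obtain ⟨u, hu⟩ := hmk strides (by decide)
  obtain ⟨v, hv⟩ := hmk strides' (by decide)
  have huv : SatisfiesId UT3pm (u, v) := by
    rw [satisfiesId_iff, hu, hv]; exact wordId_blocks hk hk10
  have hiso : ∀ s t : FreeSemigroup ℕ, (letters s).length ≤ k → WordId (letters s) (letters t) →
      ∀ φ : FreeSemigroup ℕ →ₙ* FreeSemigroup ℕ, letters (φ s) <:+: blocks k strides → s = t := by
    intro s t hs hid φ hφ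
    rw [letters_hom] at hφ
    exact letters_injective (hid.eq_of_not_hasFold (by simp [letters])
      (not_hasFold_of_factor hk hjs hc hs _ (by simp [letters]) hφ))
  have hT := hall (u, v) huv (factorCon (blocks k strides)).Quotient (by
    rintro ⟨s, t⟩ he
    have he' : (s, t) ∈ Sgm := he
    have hid := (satisfiesId_iff s t).1 (hS _ he')
    apply factorCon_satisfiesId
    rintro φ (h | h)
    · exact hiso s t (hlen _ he').1 hid φ h
    · exact (hiso t s (hlen _ he').2 (fun f hf => (hid f hf).symm) φ h).symm)
  have hq := hT ⟨fun w => (w : (factorCon (blocks k strides)).Quotient), fun _ _ => rfl⟩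
  rcases (Con.eq _).1 hq with h | h
  · apply blocks_ne hk10
    rw [← hu, ← hv]
    exact congrArg letters h
  · exact h.1 (hu ▸ List.infix_rfl)
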